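/- Let α, β ∈ ℝ and let I ⊆ ℝ be an interval with 0 ∉ I. Suppose y : I → ℝ is twice differentiable with y(x) ≠ 0 and y(x) ≠ 1 for all x ∈ I, and solves the Painlevé V equation with parameters (α, β, 0, 0): y'' = (1/(2y) + 1/(y−1))·(y')² − y'/x + ((y−1)²/x²)·(α·y + β/y). Then the function x ↦ (1/y)·(x·y'/(y−1))² + 2β/y − 2α·y is constant on I, i.e. it is a first integral of PV(α, β, 0, 0). -/

import Mathlib

/-!
With `θ = x y'`, the equation reads `x θ' = (1/(2y) + 1/(y-1)) θ² + (y-1)² (α y + β/y)`, so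
`2 x² y' / (y (y-1)²)` is an integrating factor: for every `y`, solution or not, multiplying the
left side minus the right side of PV by it gives the derivative of
`(1/y) (θ/(y-1))² + 2β/y - 2αy`.
-/

namespace PainleveV

section Definitions

variable {𝕜 : Type*} [Field 𝕜]

/-- The right-hand side of the fifth Painlevé equation `y'' = rhs α β x y y'` with parameters
`(α, β, 0, 0)`; the arguments `u` and `v` are the values of `y` and `y'` at `x`. -/
def rhs (α β x u v : 𝕜) : 𝕜 :=
  (1 / (2 * u) + 1 / (u - 1)) * v ^ 2 - v / x + ((u - 1) ^ 2 / x ^ 2) * (α * u + β / u)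

/-- The first integral of PV with parameters `(α, β, 0, 0)`, as a function of
`(x, u, v) = (x, y, y')`. -/
def firstIntegral (α β x u v : 𝕜) : 𝕜 :=
  (1 / u) * (x * v / (u - 1)) ^ 2 + 2 * β / u - 2 * α * u

end Definitions

section Derivative

variable {𝕜 : Type*} [NontriviallyNormedField 𝕜] {s : Set 𝕜} {y : 𝕜 → 𝕜} {y' x : 𝕜}

theorem hasDerivWithinAt_one_div_mul_div_sub_one_sq [NeZero (2 : 𝕜)] {θ : 𝕜 → 𝕜} {θ' : 𝕜}
    (hy : HasDerivWithinAt y y' s x) (hθ : HasDerivWithinAt θ θ' s x)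
    (hy0 : y x ≠ 0) (hy1 : y x ≠ 1) :
    HasDerivWithinAt (fun t ↦ (1 / y t) * (θ t / (y t - 1)) ^ 2)
      (2 * θ x / (y x * (y x - 1) ^ 2) *
        (θ' - (1 / (2 * y x) + 1 / (y x - 1)) * y' * θ x)) s x := by
  have hsub : y x - 1 ≠ 0 := sub_ne_zero.mpr hy1
  have hinv := (hasDerivWithinAt_const x s (1 : 𝕜)).fun_div hy hy0
  have hsq := (hθ.fun_div (hy.sub_const 1) hsub).fun_pow 2
  refine (hinv.fun_mul hsq).congr_deriv ?_
  simp only [Nat.cast_ofNat, Nat.add_one_sub_one, pow_one]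
  field_simp
  ring

theorem hasDerivWithinAt_const_div_sub_const_mul (a b : 𝕜)
    (hy : HasDerivWithinAt y y' s x) (hy0 : y x ≠ 0) :
    HasDerivWithinAt (fun t ↦ b / y t - a * y t) (-(a + b / y x ^ 2) * y') s x := by
  refine (((hasDerivWithinAt_const x s b).fun_div hy hy0).fun_sub
    (hy.const_mul a)).congr_deriv ?_
  field_simp
  ring

theorem hasDerivWithinAt_firstIntegral [NeZero (2 : 𝕜)] (α β : 𝕜) {v : 𝕜 → 𝕜} {v' : 𝕜}
    (hy : HasDerivWithinAt y (v x) s x) (hv : HasDerivWithinAt v v' s x)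
    (hx : x ≠ 0) (hy0 : y x ≠ 0) (hy1 : y x ≠ 1) :
    HasDerivWithinAt (fun t ↦ firstIntegral α β t (y t) (v t))
      (2 * x ^ 2 * v x / (y x * (y x - 1) ^ 2) * (v' - rhs α β x (y x) (v x))) s x := by
  have hθ : HasDerivWithinAt (fun t ↦ t * v t) (v x + x * v') s x := by
    simpa only [one_mul] using (hasDerivAt_id' x).hasDerivWithinAt.fun_mul hv
  have hsum := (hasDerivWithinAt_one_div_mul_div_sub_one_sq hy hθ hy0 hy1).fun_add
    (hasDerivWithinAt_const_div_sub_const_mul (2 * α) (2 * β) hy hy0)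
  have hrhs : x ^ 2 * (v' - rhs α β x (y x) (v x)) =
      x * ((v x + x * v') - (1 / (2 * y x) + 1 / (y x - 1)) * v x * (x * v x)) -
        (y x - 1) ^ 2 * (α * y x + β / y x) := by
    rw [rhs]
    field_simp
    ring
  have hderiv :
      2 * (x * v x) / (y x * (y x - 1) ^ 2) *
            ((v x + x * v') - (1 / (2 * y x) + 1 / (y x - 1)) * v x * (x * v x)) +
          -(2 * α + 2 * β / y x ^ 2) * v x =
        2 * x ^ 2 * v x / (y x * (y x - 1) ^ 2) * (v' - rhs α β x (y x) (v x)) := by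
    calc
      _ = 2 * v x / (y x * (y x - 1) ^ 2) *
            (x * ((v x + x * v') - (1 / (2 * y x) + 1 / (y x - 1)) * v x * (x * v x)) -
              (y x - 1) ^ 2 * (α * y x + β / y x)) := by
        generalize (v x + x * v') - (1 / (2 * y x) + 1 / (y x - 1)) * v x * (x * v x) = r
        field_simp
        ring
      _ = _ := by rw [← hrhs]; ring
  simpa only [firstIntegral, add_sub_assoc] using hsum.congr_deriv hderiv

end Derivative

end PainleveV

open PainleveV in
theorem PV_first_integral_general {𝕜 : Type*} [RCLike 𝕜] (α β : 𝕜) {s : Set 𝕜}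
    (hs : Convex ℝ s) (h0 : (0 : 𝕜) ∉ s) {y y' y'' : 𝕜 → 𝕜}
    (hy : ∀ x ∈ s, HasDerivWithinAt y (y' x) s x)
    (hy' : ∀ x ∈ s, HasDerivWithinAt y' (y'' x) s x)
    (hy0 : ∀ x ∈ s, y x ≠ 0) (hy1 : ∀ x ∈ s, y x ≠ 1)
    (hode : ∀ x ∈ s, y'' x = rhs α β x (y x) (y' x)) :
    ∀ x₁ ∈ s, ∀ x₂ ∈ s,
      firstIntegral α β x₁ (y x₁) (y' x₁) = firstIntegral α β x₂ (y x₂) (y' x₂) := by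
  intro x₁ hx₁ x₂ hx₂
  have hderiv : ∀ x ∈ s,
      HasDerivWithinAt (fun t ↦ firstIntegral α β t (y t) (y' t)) 0 s x := fun x hx ↦ by
    simpa only [hode x hx, sub_self, mul_zero] using
      hasDerivWithinAt_firstIntegral α β (hy x hx) (hy' x hx) (ne_of_mem_of_not_mem hx h0)
        (hy0 x hx) (hy1 x hx)
  have hnorm := hs.norm_image_sub_le_of_norm_hasDerivWithin_le (C := 0) hderiv
    (fun _ _ ↦ norm_zero.le) hx₂ hx₁
  rwa [zero_mul, norm_le_zero_iff, sub_eq_zero] at hnorm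

/-- A first integral of Painlevé V with parameters `(α, β, 0, 0)`:
along every solution `y` (omitting the values `0` and `1`) of
`y'' = (1/(2y) + 1/(y−1))(y')² − y'/x + ((y−1)²/x²)(αy + β/y)` on an interval
avoiding `0`, the quantity `(1/y)(xy'/(y−1))² + 2β/y − 2αy` is constant. -/
theorem PV_first_integral
    (α β : ℝ) (I : Set ℝ) (hI : I.OrdConnected) (h0 : (0 : ℝ) ∉ I)
    (y : ℝ → ℝ)
    (hy1 : ∀ x ∈ I, DifferentiableAt ℝ y x)
    (hy2 : ∀ x ∈ I, DifferentiableAt ℝ (deriv y) x)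
    (hy0 : ∀ x ∈ I, y x ≠ 0) (hy1' : ∀ x ∈ I, y x ≠ 1)
    (hode : ∀ x ∈ I,
      deriv (deriv y) x =
        (1 / (2 * y x) + 1 / (y x - 1)) * (deriv y x) ^ 2 - deriv y x / x
          + ((y x - 1) ^ 2 / x ^ 2) * (α * y x + β / y x)) :
    ∀ x ∈ I, ∀ x' ∈ I,
      (1 / y x) * (x * deriv y x / (y x - 1)) ^ 2 + 2 * β / y x - 2 * α * y x
        = (1 / y x') * (x' * deriv y x' / (y x' - 1)) ^ 2 + 2 * β / y x'
          - 2 * α * y x' :=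
  PV_first_integral_general α β hI.convex h0 (fun x hx ↦ (hy1 x hx).hasDerivAt.hasDerivWithinAt)
    (fun x hx ↦ (hy2 x hx).hasDerivAt.hasDerivWithinAt) hy0 hy1' hode
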